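/- Let σ₁, σ₂ > 0, let w : ℝ^d → [0,1]^d be measurable with ‖w(m₁)‖₂ > 0 for all m₁, and let g : ℝ^d × ℝ^d → Y be measurable into a finite label set Y. Define the two-step mechanism M(X) ∈ Y as g(m₁, m₂), where m₁ = X + z₁ with z₁ ∼ N(0, σ₁²I_d), and m₂ = w(m₁) ⊙ X + z₂ with z₂ ∼ N(0, (‖w(m₁)‖₂²/d)·σ₂²·I_d) drawn independently of z₁ given m₁ (⊙ is the element-wise product). Let X ∈ ℝ^d, y₊ ∈ Y, and p₊, p₋ ∈ (0,1) satisfy P(M(X) = y₊) ≥ p₊ ≥ p₋ ≥ max_{y ≠ y₊} P(M(X) = y). Set r^∞_X = (1/(2√(d·(1/σ₁² + 1/σ₂²))))·(Φ⁻¹(p₊) − Φ⁻¹(p₋)). Then for every e ∈ ℝ^d with ‖e‖_∞ ≤ r^∞_X and every y ∈ Y, P(M(X+e) = y₊) ≥ P(M(X+e) = y). -/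

import Mathlib

open MeasureTheory ProbabilityTheory Real
open scoped NNReal ENNReal

/-- Standard normal CDF Φ. -/
noncomputable def Phi (x : ℝ) : ℝ := ((gaussianReal 0 1) (Set.Iic x)).toReal

/-- Inverse of the standard normal CDF, Φ⁻¹. -/
noncomputable def PhiInv (q : ℝ) : ℝ := Function.invFun Phi q

/-- The trade-off function of the Gaussian mechanism, `G_μ(α) = Φ(Φ⁻¹(1-α) − μ)`. -/
noncomputable def Gmu (μ α : ℝ) : ℝ := Phi (PhiInv (1 - α) - μ)

/-- Euclidean (L2) norm on `ℝ^n`. -/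
noncomputable def l2norm {n : ℕ} (x : Fin n → ℝ) : ℝ := Real.sqrt (∑ i, (x i) ^ 2)

/-- Maximum (L∞) norm on `ℝ^n`. -/
noncomputable def linftyNorm {n : ℕ} (x : Fin n → ℝ) : ℝ := ⨆ i, |x i|

/-- Lp norm on `ℝ^n`. -/
noncomputable def lpNorm {n : ℕ} (p : ℝ) (x : Fin n → ℝ) : ℝ := (∑ i, |x i| ^ p) ^ (1 / p)

/-- `T(P,Q) ≥ f`: every measurable `[0,1]`-valued test `φ` has type II error
`1 − ∫ φ dQ` at least `f` of its level `∫ φ dP`. -/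
def TradeoffGE {Ω : Type*} [MeasurableSpace Ω] (P Q : Measure Ω) (f : ℝ → ℝ) : Prop :=
  ∀ φ : Ω → ℝ, Measurable φ → (∀ ω, φ ω ∈ Set.Icc (0 : ℝ) 1) →
    1 - ∫ ω, φ ω ∂Q ≥ f (∫ ω, φ ω ∂P)

/-- The Gaussian measure `N(v, s·I_d)` on `ℝ^d` (spherical covariance `s ≥ 0`). -/
noncomputable def gaussPi (d : ℕ) (v : Fin d → ℝ) (s : ℝ≥0) : Measure (Fin d → ℝ) :=
  Measure.pi fun i => gaussianReal (v i) s

/-- The two-step masked mechanism for `L_∞` certification: `m₁ = X + z₁` with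
`z₁ ∼ N(0, σ₁² I_d)`; given `m₁`, `m₂ = w(m₁) ⊙ X + z₂` with
`z₂ ∼ N(0, (‖w(m₁)‖₂²/d)·σ₂²·I_d)`; the output is `g(m₁, m₂)`. -/
noncomputable def maskedMech {d : ℕ} {Y : Type*} [MeasurableSpace Y]
    (σ₁ σ₂ : ℝ) (w : (Fin d → ℝ) → (Fin d → ℝ))
    (g : (Fin d → ℝ) → (Fin d → ℝ) → Y) (X : Fin d → ℝ) : Measure Y :=
  (gaussPi d X (σ₁ ^ 2).toNNReal).bind fun m₁ =>
    (gaussPi d (fun i => w m₁ i * X i)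
        ((l2norm (w m₁)) ^ 2 / d * σ₂ ^ 2).toNNReal).map (g m₁)

lemma Phi_eq_cdf : Phi = fun x => cdf (gaussianReal 0 1) x := by
  funext x
  rw [cdf_eq_real]; rfl

lemma Phi_mono : Monotone Phi := by
  rw [Phi_eq_cdf]; exact monotone_cdf _

lemma Phi_continuous : Continuous Phi := by
  rw [Phi_eq_cdf]
  rw [continuous_iff_continuousAt]
  intro a
  rw [continuousAt_iff_continuous_left'_right']
  refine ⟨?_, ((cdf (gaussianReal 0 1)).right_continuous a).mono Set.Ioi_subset_Ici_self⟩
  rw [Monotone.continuousWithinAt_Iio_iff_leftLim_eq (monotone_cdf _)]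
  have h := (cdf (gaussianReal 0 1)).measure_singleton a
  rw [measure_cdf] at h
  have := nullSingletonClass_gaussianReal (μ := 0) (v := 1) one_ne_zero
  rw [measure_singleton] at h
  have h2 := ENNReal.ofReal_eq_zero.1 h.symm
  have h3 := (monotone_cdf (gaussianReal 0 1)).leftLim_le (le_refl a)
  linarith

lemma Phi_PhiInv {p : ℝ} (hp : p ∈ Set.Ioo (0 : ℝ) 1) : Phi (PhiInv p) = p := by
  apply Function.invFun_eq
  have h0 : Filter.Tendsto Phi Filter.atBot (nhds 0) := by
    rw [Phi_eq_cdf]; exact tendsto_cdf_atBot _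
  have h1 : Filter.Tendsto Phi Filter.atTop (nhds 1) := by
    rw [Phi_eq_cdf]; exact tendsto_cdf_atTop _
  obtain ⟨a, ha⟩ := (h0.eventually (gt_mem_nhds hp.1)).exists
  obtain ⟨b, hb⟩ := (h1.eventually (lt_mem_nhds hp.2)).exists
  exact mem_range_of_exists_le_of_exists_ge Phi_continuous ⟨a, ha.le⟩ ⟨b, hb.le⟩

lemma gauss_Ici (m τ : ℝ) : gaussianReal m 1 (Set.Ici τ) = ENNReal.ofReal (Phi (m - τ)) := by
  have h : gaussianReal m 1 = (gaussianReal 0 1).map (fun x => m - x) := by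
    rw [gaussianReal_map_const_sub]; simp
  rw [h, Measure.map_apply (by fun_prop) measurableSet_Ici, Phi,
    ENNReal.ofReal_toReal (measure_ne_top _ _)]
  congr 1
  ext x; simp only [Set.mem_preimage, Set.mem_Ici, Set.mem_Iic]
  constructor <;> intro h <;> linarith

lemma Phi_neg (t : ℝ) : Phi (-t) = 1 - Phi t := by
  have h := gauss_Ici 0 t
  have := nullSingletonClass_gaussianReal (μ := 0) (v := 1) one_ne_zero
  have h2 : gaussianReal 0 1 (Set.Ici t) = (gaussianReal 0 1 (Set.Iic t)ᶜ) := by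
    rw [Set.compl_Iic]; exact measure_congr Ioi_ae_eq_Ici.symm
  have h3 : (gaussianReal 0 1 (Set.Ici t)).toReal = Phi (-t) := by
    rw [h, zero_sub, ENNReal.toReal_ofReal]; exact ENNReal.toReal_nonneg
  rw [← h3, h2]
  exact probReal_compl_eq_one_sub measurableSet_Iic

/-- Gaussian density of the shift. -/
noncomputable def cmD (u x : ℝ) : ℝ≥0∞ := ENNReal.ofReal (Real.exp (u * x - u ^ 2 / 2))

lemma cm_one (u : ℝ) : gaussianReal u 1 = (gaussianReal 0 1).withDensity (cmD u) := by
  rw [gaussianReal_of_var_ne_zero _ one_ne_zero, gaussianReal_of_var_ne_zero _ one_ne_zero,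
    ← withDensity_mul _ (measurable_gaussianPDF _ _) (by unfold cmD; fun_prop)]
  congr 1
  funext x
  simp only [Pi.mul_apply, gaussianPDF, cmD]
  rw [← ENNReal.ofReal_mul (gaussianPDFReal_nonneg _ _ _)]
  congr 1
  simp only [gaussianPDFReal]
  rw [mul_assoc _ (Real.exp _) (Real.exp _), ← Real.exp_add]
  congr 2
  push_cast
  ring

lemma pi_withDensity' {d : ℕ} (μ : Fin d → Measure ℝ) [∀ i, IsProbabilityMeasure (μ i)]
    (f : Fin d → ℝ → ℝ≥0∞) (hf : ∀ i, Measurable (f i))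
    [∀ i, SigmaFinite ((μ i).withDensity (f i))] :
    (Measure.pi μ).withDensity (fun x => ∏ i, f i (x i)) =
      Measure.pi (fun i => (μ i).withDensity (f i)) := by
  refine (Measure.pi_eq fun s hs => ?_).symm
  rw [withDensity_apply _ (.univ_pi hs), ← lintegral_indicator (.univ_pi hs)]
  have h1 : ∀ x : Fin d → ℝ, (Set.univ.pi s).indicator (fun x => ∏ i, f i (x i)) x
      = ∏ i, (s i).indicator (f i) (x i) := by
    intro x
    by_cases hx : x ∈ Set.univ.pi s
    · rw [Set.indicator_of_mem hx]
      refine Finset.prod_congr rfl fun i _ => ?_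
      rw [Set.indicator_of_mem (hx i trivial)]
    · rw [Set.indicator_of_notMem hx]
      simp only [Set.mem_pi, Set.mem_univ, true_implies, not_forall] at hx
      obtain ⟨i, hi⟩ := hx
      exact (Finset.prod_eq_zero (Finset.mem_univ i) (Set.indicator_of_notMem hi _)).symm
  simp_rw [h1]
  have hm : ∀ i, Measurable ((s i).indicator (f i)) := fun i => (hf i).indicator (hs i)
  have hind := iIndepFun_pi (μ := μ) (X := fun i => (s i).indicator (f i))
    (fun i => (hm i).aemeasurable)
  rw [lintegral_prod_eq_prod_lintegral_of_indepFun Finset.univ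
    (fun i (x : Fin d → ℝ) => (s i).indicator (f i) (x i)) hind
    (fun i => (hm i).comp (measurable_pi_apply i))]
  refine Finset.prod_congr rfl fun i _ => ?_
  rw [withDensity_apply _ (hs i), ← lintegral_indicator (hs i)]
  rw [← (measurePreserving_eval μ i).lintegral_comp (hm i)]

noncomputable def cmDv {d : ℕ} (u x : Fin d → ℝ) : ℝ≥0∞ :=
  ENNReal.ofReal (Real.exp (∑ i, u i * x i - (∑ i, u i ^ 2) / 2))

lemma cm_pi {d : ℕ} (u : Fin d → ℝ) :
    gaussPi d u 1 = (gaussPi d 0 1).withDensity (cmDv u) := by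
  have h : cmDv u = fun x => ∏ i, cmD (u i) (x i) := by
    funext x
    simp only [cmDv, cmD]
    rw [← ENNReal.ofReal_prod_of_nonneg (fun i _ => (Real.exp_pos _).le), ← Real.exp_sum,
      Finset.sum_sub_distrib, Finset.sum_div]
  have h2 : ∀ i, gaussianReal (u i) 1 = (gaussianReal 0 1).withDensity (cmD (u i)) :=
    fun i => cm_one _
  have : ∀ i, SigmaFinite ((gaussianReal 0 1).withDensity (cmD (u i))) := fun i => by
    rw [← h2 i]; infer_instance
  rw [h]
  unfold gaussPi
  simp_rw [h2]
  exact (pi_withDensity' (fun _ => gaussianReal 0 1) (fun i => cmD (u i))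
    (fun i => by unfold cmD; fun_prop)).symm

instance gaussPi_prob (d : ℕ) (v : Fin d → ℝ) (s : ℝ≥0) : IsProbabilityMeasure (gaussPi d v s) := by
  unfold gaussPi; infer_instance

lemma gaussPi_eq_map {d : ℕ} (v u : Fin d → ℝ) (s : ℝ≥0) (ρ : ℝ) (hρ : ρ ^ 2 = s) :
    gaussPi d (fun i => v i + ρ * u i) s
      = (gaussPi d u 1).map (fun z i => v i + ρ * z i) := by
  unfold gaussPi
  have h : ∀ i, gaussianReal (v i + ρ * u i) s
      = (gaussianReal (u i) 1).map (fun z => v i + ρ * z) := by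
    intro i
    have : (fun z : ℝ => v i + ρ * z) = (fun z => v i + z) ∘ (fun z => ρ * z) := rfl
    rw [this, ← Measure.map_map (by fun_prop) (by fun_prop), gaussianReal_map_const_mul,
      gaussianReal_map_const_add, add_comm]
    congr 1
    ext; simp [hρ]
  simp_rw [h]
  have : ∀ i, SigmaFinite ((gaussianReal (u i) 1).map (fun z => v i + ρ * z)) := fun i => by
    rw [← h i]; infer_instance
  exact (Measure.pi_map_pi (μ := fun i => gaussianReal (u i) 1)
    (f := fun i z => v i + ρ * z) (fun i => by fun_prop)).symm

lemma meas_linear {d : ℕ} (u : Fin d → ℝ) : Measurable (fun z : Fin d → ℝ => ∑ i, u i * z i) :=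
  Finset.measurable_sum _ fun i _ => (measurable_pi_apply i).const_mul _

lemma map_linear {d : ℕ} (u : Fin d → ℝ) :
    (gaussPi d 0 1).map (fun z => ∑ i, u i * z i)
      = gaussianReal 0 (∑ i, u i ^ 2).toNNReal := by
  have : IsProbabilityMeasure ((gaussPi d 0 1).map (fun z => ∑ i, u i * z i)) :=
    Measure.isProbabilityMeasure_map (meas_linear u).aemeasurable
  refine Measure.ext_of_charFun ?_
  ext t
  rw [charFun_gaussianReal, charFun_apply_real, integral_map (meas_linear u).aemeasurable (by fun_prop)]
  have h1 : ∀ z : Fin d → ℝ, Complex.exp (t * ((∑ i, u i * z i : ℝ) : ℂ) * Complex.I)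
      = ∏ i, Complex.exp ((t * u i : ℝ) * (z i : ℂ) * Complex.I) := by
    intro z
    rw [← Complex.exp_sum]
    congr 1
    push_cast
    rw [Finset.mul_sum, Finset.sum_mul]
    exact Finset.sum_congr rfl fun i _ => by ring
  simp_rw [h1]
  unfold gaussPi
  rw [integral_fintype_prod_eq_prod
    (f := fun i (x : ℝ) => Complex.exp ((t * u i : ℝ) * (x : ℂ) * Complex.I))]
  have h2 : ∀ i, ∫ x : ℝ, Complex.exp ((t * u i : ℝ) * (x : ℂ) * Complex.I) ∂(gaussianReal 0 1)
      = Complex.exp (- ((t * u i : ℝ) : ℂ) ^ 2 / 2) := by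
    intro i
    rw [← charFun_apply_real, charFun_gaussianReal]
    congr 1; push_cast; ring
  have h0 : ∀ i, gaussianReal ((0 : Fin d → ℝ) i) 1 = gaussianReal 0 1 := fun i => rfl
  simp_rw [h0, h2]
  rw [← Complex.exp_sum]
  congr 1
  have h3 : (((∑ i, u i ^ 2).toNNReal : ℝ≥0) : ℝ) = ∑ i, u i ^ 2 :=
    Real.coe_toNNReal _ (Finset.sum_nonneg fun i _ => sq_nonneg _)
  rw [h3]
  push_cast
  rw [Finset.sum_mul, Finset.sum_div, mul_zero, zero_mul, zero_sub, ← Finset.sum_neg_distrib]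
  exact Finset.sum_congr rfl fun i _ => by ring

lemma jensen_aux (k : ℝ≥0∞) (s : ℝ) (c : ℝ≥0) :
    ENNReal.ofReal (Real.exp (s + c / 2)) - k ≤
      ∫⁻ y, (ENNReal.ofReal (Real.exp (s + y)) - k) ∂(gaussianReal 0 c) := by
  have h1 : ∫⁻ y, ENNReal.ofReal (Real.exp (s + y)) ∂(gaussianReal 0 c)
      = ENNReal.ofReal (Real.exp (s + c / 2)) := by
    have hint : Integrable (fun y => Real.exp (s + y)) (gaussianReal 0 c) := by
      have := (integrable_exp_mul_gaussianReal (μ := 0) (v := c) 1).const_mul (Real.exp s)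
      refine this.congr (Filter.Eventually.of_forall fun y => ?_)
      simp [Real.exp_add]
    rw [← ofReal_integral_eq_lintegral_ofReal hint
      (Filter.Eventually.of_forall fun y => (Real.exp_pos _).le)]
    congr 1
    simp_rw [Real.exp_add]
    rw [integral_const_mul]
    congr 1
    have := congrFun (mgf_id_gaussianReal (μ := 0) (v := c)) 1
    simpa [mgf] using this
  calc _ = ∫⁻ y, ENNReal.ofReal (Real.exp (s + y)) ∂(gaussianReal 0 c)
        - ∫⁻ y, k ∂(gaussianReal 0 c) := by rw [h1]; simp
    _ ≤ _ := by
      rw [tsub_le_iff_right, ← lintegral_add_right _ measurable_const]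
      exact lintegral_mono fun y => le_tsub_add

lemma conv_aux (a b : ℝ) (ha : 0 ≤ a) (hb : 0 ≤ b) (F : ℝ → ℝ≥0∞) (hF : Measurable F) :
    ∫⁻ x, F x ∂(gaussianReal 0 (a + b).toNNReal) =
      ∫⁻ x, ∫⁻ y, F (x + y) ∂(gaussianReal 0 b.toNNReal) ∂(gaussianReal 0 a.toNNReal) := by
  rw [Real.toNNReal_add ha hb]
  have := gaussianReal_conv_gaussianReal (m₁ := 0) (m₂ := 0) (v₁ := a.toNNReal) (v₂ := b.toNNReal)
  rw [add_zero] at this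
  rw [← this, Measure.lintegral_conv hF]

lemma core {d : ℕ} (u : Fin d → ℝ) (v : (Fin d → ℝ) → (Fin d → ℝ)) (hv : Measurable v)
    (M : ℝ) (hM : ∀ z, ∑ i, u i ^ 2 + ∑ i, v z i ^ 2 ≤ M ^ 2)
    (G : (Fin d → ℝ) → (Fin d → ℝ) → ℝ≥0∞)
    (hG : Measurable fun q : (Fin d → ℝ) × (Fin d → ℝ) => G q.1 q.2)
    (hG1 : ∀ a b, G a b ≤ 1) (k : ℝ≥0∞) :
    ∫⁻ z, cmDv u z * ∫⁻ z', cmDv (v z) z' * G z z' ∂(gaussPi d 0 1) ∂(gaussPi d 0 1)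
      ≤ k * ∫⁻ z, ∫⁻ z', G z z' ∂(gaussPi d 0 1) ∂(gaussPi d 0 1)
        + ∫⁻ x, (ENNReal.ofReal (Real.exp (x - M ^ 2 / 2)) - k)
            ∂(gaussianReal 0 (M ^ 2).toNNReal) := by
  set H : ℝ → ℝ≥0∞ := fun x => ENNReal.ofReal (Real.exp (x - M ^ 2 / 2)) - k with hHdef
  have hH : Measurable H := by rw [hHdef]; fun_prop
  have hu0 : 0 ≤ ∑ i, u i ^ 2 := Finset.sum_nonneg fun i _ => sq_nonneg _
  have hv0 : ∀ z, 0 ≤ ∑ i, v z i ^ 2 := fun z => Finset.sum_nonneg fun i _ => sq_nonneg _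
  set a2 : ℝ := M ^ 2 - ∑ i, u i ^ 2 with ha2
  have ha2' : 0 ≤ a2 := by linarith [hM 0, hv0 0]
  have hmD : ∀ w : Fin d → ℝ, Measurable (cmDv w) := by
    intro w; unfold cmDv
    exact ((((meas_linear w).sub_const _)).exp).ennreal_ofReal
  have hGz : ∀ z, Measurable (G z) := fun z => hG.comp measurable_prodMk_left
  have step1 : ∀ z z', cmDv u z * cmDv (v z) z' - k ≤
      ∫⁻ y, H (∑ i, u i * z i + (∑ i, v z i * z' i + y))
        ∂(gaussianReal 0 (a2 - ∑ i, v z i ^ 2).toNNReal) := by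
    intro z z'
    have hc : 0 ≤ a2 - ∑ i, v z i ^ 2 := by linarith [hM z]
    have := jensen_aux k (∑ i, u i * z i + ∑ i, v z i * z' i - M ^ 2 / 2)
      (a2 - ∑ i, v z i ^ 2).toNNReal
    rw [Real.coe_toNNReal _ hc] at this
    have e1 : cmDv u z * cmDv (v z) z' = ENNReal.ofReal (Real.exp
        (∑ i, u i * z i + ∑ i, v z i * z' i - M ^ 2 / 2 + (a2 - ∑ i, v z i ^ 2) / 2)) := by
      unfold cmDv
      rw [← ENNReal.ofReal_mul (Real.exp_pos _).le, ← Real.exp_add]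
      congr 2
      rw [ha2]; ring
    rw [e1]
    refine this.trans (le_of_eq (lintegral_congr fun y => ?_))
    simp only [hHdef]
    congr 3
    ring
  have step2 : ∀ z, ∫⁻ z', (cmDv u z * cmDv (v z) z' - k) ∂(gaussPi d 0 1) ≤
      ∫⁻ y, H (∑ i, u i * z i + y) ∂(gaussianReal 0 a2.toNNReal) := by
    intro z
    have hc : 0 ≤ a2 - ∑ i, v z i ^ 2 := by linarith [hM z]
    have e : a2 = ∑ i, v z i ^ 2 + (a2 - ∑ i, v z i ^ 2) := by ring
    rw [e, conv_aux _ _ (hv0 z) hc (fun y => H (∑ i, u i * z i + y)) (by fun_prop),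
      ← map_linear, lintegral_map _ (meas_linear _)]
    · refine lintegral_mono fun z' => ?_
      simpa using step1 z z'
    · refine Measurable.lintegral_prod_right' (f := fun q : ℝ × ℝ =>
        H (∑ i, u i * z i + (q.1 + q.2))) (by fun_prop)
  have step3 : ∀ z, cmDv u z * ∫⁻ z', cmDv (v z) z' * G z z' ∂(gaussPi d 0 1) ≤
      k * ∫⁻ z', G z z' ∂(gaussPi d 0 1)
        + ∫⁻ y, H (∑ i, u i * z i + y) ∂(gaussianReal 0 a2.toNNReal) := by
    intro z
    refine le_trans ?_ (add_le_add le_rfl (step2 z))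
    have hDG : Measurable fun z' => cmDv (v z) z' * G z z' := (hmD _).mul (hGz z)
    rw [← lintegral_const_mul _ hDG, ← lintegral_const_mul _ (hGz z),
      ← lintegral_add_left ((hGz z).const_mul k)]
    refine lintegral_mono fun z' => ?_
    show cmDv u z * (cmDv (v z) z' * G z z') ≤
      k * G z z' + (cmDv u z * cmDv (v z) z' - k)
    calc cmDv u z * (cmDv (v z) z' * G z z') = (cmDv u z * cmDv (v z) z') * G z z' := by
          rw [mul_assoc]
      _ ≤ (k + (cmDv u z * cmDv (v z) z' - k)) * G z z' := by
          gcongr; exact le_add_tsub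
      _ = k * G z z' + (cmDv u z * cmDv (v z) z' - k) * G z z' := add_mul _ _ _
      _ ≤ k * G z z' + (cmDv u z * cmDv (v z) z' - k) * 1 := by gcongr; exact hG1 _ _
      _ = _ := by rw [mul_one]
  refine (lintegral_mono step3).trans ?_
  have hGm : Measurable fun z => ∫⁻ z', G z z' ∂(gaussPi d 0 1) :=
    Measurable.lintegral_prod_right' (f := fun q : (Fin d → ℝ) × (Fin d → ℝ) => G q.1 q.2) hG
  rw [lintegral_add_left (hGm.const_mul k), lintegral_const_mul _ hGm]
  refine add_le_add le_rfl (le_of_eq ?_)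
  have e : M ^ 2 = ∑ i, u i ^ 2 + a2 := by rw [ha2]; ring
  rw [e, conv_aux _ _ hu0 ha2' H hH, ← map_linear, lintegral_map _ (meas_linear _)]
  refine Measurable.lintegral_prod_right' (f := fun q : ℝ × ℝ => H (q.1 + q.2)) (by fun_prop)

lemma oneD (M τ : ℝ) (hM : 0 ≤ M) :
    ∫⁻ x, (ENNReal.ofReal (Real.exp (x - M ^ 2 / 2)) - cmD M τ)
            ∂(gaussianReal 0 (M ^ 2).toNNReal)
      + cmD M τ * gaussianReal 0 1 (Set.Ici τ) = gaussianReal M 1 (Set.Ici τ) := by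
  have h : gaussianReal 0 (M ^ 2).toNNReal = (gaussianReal 0 1).map (fun x => M * x) := by
    rw [gaussianReal_map_const_mul]
    congr 1
    · simp
    · ext; simp [sq_nonneg]
  have hm : Measurable (cmD M) := by unfold cmD; fun_prop
  rw [h, lintegral_map (by fun_prop) (by fun_prop), cm_one M, withDensity_apply _ measurableSet_Ici]
  have e1 : ∫⁻ x, (ENNReal.ofReal (Real.exp (M * x - M ^ 2 / 2)) - cmD M τ) ∂(gaussianReal 0 1)
      = ∫⁻ x in Set.Ici τ, (cmD M x - cmD M τ) ∂(gaussianReal 0 1) := by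
    rw [← lintegral_indicator measurableSet_Ici]
    refine lintegral_congr fun x => ?_
    by_cases hx : x ∈ Set.Ici τ
    · rw [Set.indicator_of_mem hx]; rfl
    · rw [Set.indicator_of_notMem hx, tsub_eq_zero_iff_le]
      simp only [Set.mem_Ici, not_le] at hx
      unfold cmD
      gcongr
  rw [e1, ← setLIntegral_const, ← lintegral_add_right _ measurable_const]
  refine setLIntegral_congr_fun measurableSet_Ici fun x hx => ?_
  refine tsub_add_cancel_of_le ?_
  unfold cmD
  have : τ ≤ x := hx
  gcongr

lemma core2 {d : ℕ} (u : Fin d → ℝ) (v : (Fin d → ℝ) → (Fin d → ℝ)) (hv : Measurable v)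
    (M : ℝ) (hM0 : 0 ≤ M) (hM : ∀ z, ∑ i, u i ^ 2 + ∑ i, v z i ^ 2 ≤ M ^ 2)
    (G : (Fin d → ℝ) → (Fin d → ℝ) → ℝ≥0∞)
    (hG : Measurable fun q : (Fin d → ℝ) × (Fin d → ℝ) => G q.1 q.2)
    (hG1 : ∀ a b, G a b ≤ 1) (t : ℝ)
    (hP : ∫⁻ z, ∫⁻ z', G z z' ∂(gaussPi d 0 1) ∂(gaussPi d 0 1) ≤ ENNReal.ofReal (Phi t)) :
    ∫⁻ z, cmDv u z * ∫⁻ z', cmDv (v z) z' * G z z' ∂(gaussPi d 0 1) ∂(gaussPi d 0 1)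
      ≤ ENNReal.ofReal (Phi (t + M)) := by
  have h1 := gauss_Ici 0 (-t)
  have h2 := gauss_Ici M (-t)
  rw [show (0 : ℝ) - -t = t by ring] at h1
  rw [show M - -t = t + M by ring] at h2
  rw [← h1] at hP
  rw [← h2, ← oneD M (-t) hM0, add_comm]
  refine (core u v hv M hM G hG hG1 (cmD M (-t))).trans ?_
  gcongr

lemma measurable_cmDv {d : ℕ} (w : Fin d → ℝ) : Measurable (cmDv w) := by
  unfold cmDv
  exact ((((meas_linear w).sub_const _)).exp).ennreal_ofReal

lemma cmDv_zero {d : ℕ} (z : Fin d → ℝ) : cmDv 0 z = 1 := by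
  simp [cmDv]

lemma measurable_l2norm {d : ℕ} : Measurable (l2norm : (Fin d → ℝ) → ℝ) := by
  unfold l2norm
  exact (Finset.measurable_sum _ fun i _ => (measurable_pi_apply i).pow_const 2).sqrt

/-- The standard deviation of the second step. -/
noncomputable def rho {d : ℕ} (σ₂ : ℝ) (w : (Fin d → ℝ) → (Fin d → ℝ)) (m : Fin d → ℝ) : ℝ :=
  Real.sqrt ((l2norm (w m)) ^ 2 / d * σ₂ ^ 2)

lemma rho_sq {d : ℕ} (σ₂ : ℝ) (w : (Fin d → ℝ) → (Fin d → ℝ)) (m : Fin d → ℝ) :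
    rho σ₂ w m ^ 2 = (l2norm (w m)) ^ 2 / d * σ₂ ^ 2 :=
  Real.sq_sqrt (by positivity)

lemma measurable_rho {d : ℕ} (σ₂ : ℝ) (w : (Fin d → ℝ) → (Fin d → ℝ)) (hw : Measurable w) :
    Measurable (rho σ₂ w) := by
  unfold rho
  exact ((((measurable_l2norm.comp hw).pow_const 2).div_const _).mul_const _).sqrt

section mech
variable {d : ℕ} {Y : Type*} [MeasurableSpace Y]
    (σ₁ σ₂ : ℝ) (w : (Fin d → ℝ) → (Fin d → ℝ)) (g : (Fin d → ℝ) → (Fin d → ℝ) → Y)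

lemma measurable_inner (hwmeas : Measurable w)
    (hgmeas : Measurable fun q : (Fin d → ℝ) × (Fin d → ℝ) => g q.1 q.2) (X : Fin d → ℝ) :
    Measurable fun q : (Fin d → ℝ) × (Fin d → ℝ) =>
      g q.1 (fun i => w q.1 i * X i + rho σ₂ w q.1 * q.2 i) := by
  have hr := measurable_rho σ₂ w hwmeas
  have h : Measurable fun q : (Fin d → ℝ) × (Fin d → ℝ) =>
      (q.1, (fun i => w q.1 i * X i + rho σ₂ w q.1 * q.2 i)) := by
    refine measurable_fst.prodMk (measurable_pi_lambda _ fun i => ?_)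
    exact (((measurable_pi_apply i).comp (hwmeas.comp measurable_fst)).mul_const _).add
      ((hr.comp measurable_fst).mul ((measurable_pi_apply i).comp measurable_snd))
  exact hgmeas.comp h

lemma kernel_meas (hwmeas : Measurable w)
    (hgmeas : Measurable fun q : (Fin d → ℝ) × (Fin d → ℝ) => g q.1 q.2) (X : Fin d → ℝ) :
    Measurable fun m₁ => (gaussPi d (fun i => w m₁ i * X i)
        ((l2norm (w m₁)) ^ 2 / d * σ₂ ^ 2).toNNReal).map (g m₁) := by
  have hin := measurable_inner σ₂ w g hwmeas hgmeas X
  have hgm : ∀ m, Measurable (g m) := fun m => hgmeas.comp measurable_prodMk_left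
  refine Measure.measurable_of_measurable_coe _ fun s hs => ?_
  have e : ∀ m, ((gaussPi d (fun i => w m i * X i)
        ((l2norm (w m)) ^ 2 / d * σ₂ ^ 2).toNNReal).map (g m)) s
      = gaussPi d 0 1 (Prod.mk m ⁻¹' ((fun q : (Fin d → ℝ) × (Fin d → ℝ) =>
      g q.1 (fun i => w q.1 i * X i + rho σ₂ w q.1 * q.2 i)) ⁻¹' s)) := by
    intro m
    have h1 := gaussPi_eq_map (fun i => w m i * X i) 0
      ((l2norm (w m)) ^ 2 / d * σ₂ ^ 2).toNNReal (rho σ₂ w m)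
      (by rw [rho_sq, Real.coe_toNNReal _ (by positivity)])
    simp only [Pi.zero_apply, mul_zero, add_zero] at h1
    rw [h1, Measure.map_apply (hgm m) hs, Measure.map_apply (by fun_prop) (hgm m hs)]
    rfl
  simp_rw [e]
  exact measurable_measure_prodMk_left (hin hs)

lemma mech_prob (hwmeas : Measurable w)
    (hgmeas : Measurable fun q : (Fin d → ℝ) × (Fin d → ℝ) => g q.1 q.2) (X : Fin d → ℝ) :
    IsProbabilityMeasure (maskedMech σ₁ σ₂ w g X) := by
  have hgm : ∀ m, Measurable (g m) := fun m => hgmeas.comp measurable_prodMk_left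
  refine ⟨?_⟩
  unfold maskedMech
  rw [Measure.bind_apply .univ (kernel_meas σ₂ w g hwmeas hgmeas X).aemeasurable]
  have : ∀ m, ((gaussPi d (fun i => w m i * X i)
        ((l2norm (w m)) ^ 2 / d * σ₂ ^ 2).toNNReal).map (g m)) Set.univ = 1 := by
    intro m
    rw [Measure.map_apply (hgm m) .univ]; simp
  simp_rw [this]
  simp

lemma mech_apply (hσ₁ : 0 < σ₁) (hwmeas : Measurable w) (hrho : ∀ m, rho σ₂ w m ≠ 0)
    (hgmeas : Measurable fun q : (Fin d → ℝ) × (Fin d → ℝ) => g q.1 q.2) (X e : Fin d → ℝ)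
    (B : Set Y) (hB : MeasurableSet B)
    (G : (Fin d → ℝ) → (Fin d → ℝ) → ℝ≥0∞)
    (hGdef : G = fun z z' => B.indicator 1 (g (fun i => X i + σ₁ * z i)
      (fun i => w (fun i => X i + σ₁ * z i) i * X i + rho σ₂ w (fun i => X i + σ₁ * z i) * z' i)))
    (v : (Fin d → ℝ) → (Fin d → ℝ))
    (hvdef : v = fun z i => w (fun i => X i + σ₁ * z i) i * e i
      / rho σ₂ w (fun i => X i + σ₁ * z i)) :
    maskedMech σ₁ σ₂ w g (X + e) B =
      ∫⁻ z, cmDv (fun i => e i / σ₁) z *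
        ∫⁻ z', cmDv (v z) z' * G z z' ∂(gaussPi d 0 1) ∂(gaussPi d 0 1) := by
  have hgm : ∀ m, Measurable (g m) := fun m => hgmeas.comp measurable_prodMk_left
  have hK := kernel_meas σ₂ w g hwmeas hgmeas (X + e)
  have hKB : Measurable fun m₁ => ((gaussPi d (fun i => w m₁ i * (X + e) i)
        ((l2norm (w m₁)) ^ 2 / d * σ₂ ^ 2).toNNReal).map (g m₁)) B :=
    (Measure.measurable_coe hB).comp hK
  have hms : Measurable fun z : Fin d → ℝ => (fun i => X i + σ₁ * z i) := by fun_prop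
  have hGz : ∀ z, Measurable (G z) := by
    intro z
    rw [hGdef]
    exact (measurable_one.indicator hB).comp ((hgm _).comp (by fun_prop))
  unfold maskedMech
  rw [Measure.bind_apply hB hK.aemeasurable]
  have h0 := gaussPi_eq_map X (fun i => e i / σ₁) (σ₁ ^ 2).toNNReal σ₁
    (Real.coe_toNNReal _ (by positivity)).symm
  have h0' : (fun i => X i + σ₁ * (e i / σ₁)) = X + e := by
    funext i; simp only [Pi.add_apply]; field_simp
  rw [h0'] at h0
  have hinner : ∀ z : Fin d → ℝ, ((gaussPi d (fun i => w (fun i => X i + σ₁ * z i) i * (X + e) i)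
        ((l2norm (w (fun i => X i + σ₁ * z i))) ^ 2 / d * σ₂ ^ 2).toNNReal).map
          (g (fun i => X i + σ₁ * z i))) B
        = ∫⁻ z', cmDv (v z) z' * G z z' ∂(gaussPi d 0 1) := by
    intro z
    set m : Fin d → ℝ := fun i => X i + σ₁ * z i with hm
    have h1 := gaussPi_eq_map (fun i => w m i * X i) (v z)
      ((l2norm (w m)) ^ 2 / d * σ₂ ^ 2).toNNReal (rho σ₂ w m)
      (by rw [rho_sq, Real.coe_toNNReal _ (by positivity)])
    have h1' : (fun i => w m i * X i + rho σ₂ w m * v z i) = fun i => w m i * (X + e) i := by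
      funext i
      have := hrho m
      rw [hvdef]
      simp only [Pi.add_apply, ← hm]
      field_simp
    rw [h1'] at h1
    rw [h1, Measure.map_apply (hgm m) hB, Measure.map_apply (by fun_prop) (hgm m hB), cm_pi,
      withDensity_apply _ ((by fun_prop : Measurable fun (z : Fin d → ℝ) i =>
        w m i * X i + rho σ₂ w m * z i) (hgm m hB)),
      ← lintegral_indicator ((by fun_prop : Measurable fun (z : Fin d → ℝ) i =>
        w m i * X i + rho σ₂ w m * z i) (hgm m hB))]
    refine lintegral_congr fun z' => ?_
    rw [hGdef]
    simp only [← hm]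
    by_cases hz : g m (fun i => w m i * X i + rho σ₂ w m * z' i) ∈ B
    · rw [Set.indicator_of_mem hz, Set.indicator_of_mem (by exact hz)]; simp
    · rw [Set.indicator_of_notMem hz, Set.indicator_of_notMem (by exact hz)]; simp
  have hKBm := hKB.comp hms
  simp only [Function.comp_def, hinner] at hKBm
  rw [h0, lintegral_map hKB hms, cm_pi]
  simp_rw [hinner]
  rw [lintegral_withDensity_eq_lintegral_mul _ (measurable_cmDv _) hKBm]
  rfl

lemma shift_bound (hσ₁ : 0 < σ₁) (hwmeas : Measurable w) (hrho : ∀ m, rho σ₂ w m ≠ 0)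
    (hgmeas : Measurable fun q : (Fin d → ℝ) × (Fin d → ℝ) => g q.1 q.2) (X e : Fin d → ℝ)
    (M : ℝ) (hM0 : 0 ≤ M)
    (hM : ∀ m, ∑ i, (e i / σ₁) ^ 2 + ∑ i, (w m i * e i / rho σ₂ w m) ^ 2 ≤ M ^ 2)
    (B : Set Y) (hB : MeasurableSet B) (t : ℝ)
    (hP : maskedMech σ₁ σ₂ w g X B ≤ ENNReal.ofReal (Phi t)) :
    maskedMech σ₁ σ₂ w g (X + e) B ≤ ENNReal.ofReal (Phi (t + M)) := by
  have hbase := mech_apply σ₁ σ₂ w g hσ₁ hwmeas hrho hgmeas X 0 B hB _ rfl _ rfl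
  rw [mech_apply σ₁ σ₂ w g hσ₁ hwmeas hrho hgmeas X e B hB _ rfl _ rfl]
  have z1 : (fun i => (0 : Fin d → ℝ) i / σ₁) = 0 := by funext i; simp
  have z2 : ∀ m : Fin d → ℝ, (fun i => w m i * (0 : Fin d → ℝ) i / rho σ₂ w m) = 0 := by
    intro m; funext i; simp
  simp only [add_zero, z1, z2, cmDv_zero, one_mul] at hbase
  rw [hbase] at hP
  have hm : Measurable fun z : Fin d → ℝ => (fun i => X i + σ₁ * z i) := by fun_prop
  refine core2 _ _ ?_ M hM0 (fun z => hM _) _ ?_ ?_ t hP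
  · refine measurable_pi_lambda _ fun i => ?_
    exact (((measurable_pi_apply i).comp (hwmeas.comp hm)).mul_const _).div
      ((measurable_rho σ₂ w hwmeas).comp hm)
  · exact (measurable_one.indicator hB).comp
      ((measurable_inner σ₂ w g hwmeas hgmeas X).comp
        ((hm.comp measurable_fst).prodMk measurable_snd))
  · intro a b
    exact Set.indicator_le_self' (fun _ _ => bot_le) _
end mech

/-- **Adaptive RS for `L_∞`-bounded adversaries.**
With an input-dependent mask `w : ℝ^d → [0,1]^d` (with `‖w(m₁)‖₂ > 0`), if
`P(M(X) = y₊) ≥ p₊ ≥ p₋ ≥ max_{y ≠ y₊} P(M(X) = y)` then for every `e` with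
`‖e‖_∞ ≤ (1/(2√(d(1/σ₁² + 1/σ₂²))))(Φ⁻¹(p₊) − Φ⁻¹(p₋))`, `y₊` remains a most probable
class of the masked mechanism at `X + e`. -/
theorem ars_linfty_certificate {d : ℕ} {Y : Type*} [Fintype Y] [MeasurableSpace Y]
    [MeasurableSingletonClass Y]
    (σ₁ σ₂ : ℝ) (hσ₁ : 0 < σ₁) (hσ₂ : 0 < σ₂)
    (w : (Fin d → ℝ) → (Fin d → ℝ)) (hwmeas : Measurable w)
    (hw01 : ∀ m₁ i, w m₁ i ∈ Set.Icc (0 : ℝ) 1)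
    (hwpos : ∀ m₁, 0 < l2norm (w m₁))
    (g : (Fin d → ℝ) → (Fin d → ℝ) → Y)
    (hgmeas : Measurable fun q : (Fin d → ℝ) × (Fin d → ℝ) => g q.1 q.2)
    (X : Fin d → ℝ) (yPlus : Y) (pPlus pMinus : ℝ)
    (hpPlus : pPlus ∈ Set.Ioo (0 : ℝ) 1) (hpMinus : pMinus ∈ Set.Ioo (0 : ℝ) 1)
    (hplus : ((maskedMech σ₁ σ₂ w g X) {yPlus}).toReal ≥ pPlus)
    (horder : pPlus ≥ pMinus)
    (hminus : ∀ y : Y, y ≠ yPlus → ((maskedMech σ₁ σ₂ w g X) {y}).toReal ≤ pMinus) :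
    ∀ e : Fin d → ℝ,
      linftyNorm e ≤
        1 / (2 * Real.sqrt (d * (1 / σ₁ ^ 2 + 1 / σ₂ ^ 2))) * (PhiInv pPlus - PhiInv pMinus) →
      ∀ y : Y,
        ((maskedMech σ₁ σ₂ w g (X + e)) {yPlus}).toReal ≥
          ((maskedMech σ₁ σ₂ w g (X + e)) {y}).toReal := by
  intro e he y
  by_cases hy : y = yPlus
  · rw [hy]
  have hd : 0 < d := by
    rcases Nat.eq_zero_or_pos d with h | h
    · subst h
      have := hwpos 0
      simp [l2norm] at this
    · exact h
  have hdR : (0 : ℝ) < d := by exact_mod_cast hd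
  have hrho : ∀ m, 0 < rho σ₂ w m := fun m => by
    have := hwpos m
    unfold rho
    positivity
  set R := linftyNorm e with hR
  have hei : ∀ i, |e i| ≤ R := fun i =>
    le_ciSup (f := fun i => |e i|) (Set.finite_range _).bddAbove i
  have hR0 : 0 ≤ R := (abs_nonneg _).trans (hei ⟨0, hd⟩)
  have hei2 : ∀ i, e i ^ 2 ≤ R ^ 2 := fun i => by
    rw [← sq_abs]; exact pow_le_pow_left₀ (abs_nonneg _) (hei i) 2
  set S := Real.sqrt (d * (1 / σ₁ ^ 2 + 1 / σ₂ ^ 2)) with hS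
  have hS0 : 0 < S := by rw [hS]; positivity
  have hS2 : S ^ 2 = d * (1 / σ₁ ^ 2 + 1 / σ₂ ^ 2) := Real.sq_sqrt (by positivity)
  have hRS : 2 * (R * S) ≤ PhiInv pPlus - PhiInv pMinus := by
    rw [div_mul_eq_mul_div, one_mul, le_div_iff₀ (by positivity)] at he
    linarith
  have hM : ∀ m, ∑ i, (e i / σ₁) ^ 2 + ∑ i, (w m i * e i / rho σ₂ w m) ^ 2 ≤ (R * S) ^ 2 := by
    intro m
    have hl : l2norm (w m) ^ 2 = ∑ i, w m i ^ 2 :=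
      Real.sq_sqrt (Finset.sum_nonneg fun i _ => sq_nonneg _)
    have hWpos : 0 < ∑ i, w m i ^ 2 := by rw [← hl]; exact pow_pos (hwpos m) 2
    have b1 : ∑ i, (e i / σ₁) ^ 2 ≤ R ^ 2 * (d * (1 / σ₁ ^ 2)) := by
      calc ∑ i, (e i / σ₁) ^ 2 ≤ ∑ _i : Fin d, R ^ 2 / σ₁ ^ 2 := by
            refine Finset.sum_le_sum fun i _ => ?_
            rw [div_pow]
            exact div_le_div_of_nonneg_right (hei2 i) (by positivity)
        _ = _ := by simp; ring
    have b2 : ∑ i, (w m i * e i / rho σ₂ w m) ^ 2 ≤ R ^ 2 * (d * (1 / σ₂ ^ 2)) := by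
      calc ∑ i, (w m i * e i / rho σ₂ w m) ^ 2
          ≤ ∑ i, w m i ^ 2 * (R ^ 2 / rho σ₂ w m ^ 2) := by
            refine Finset.sum_le_sum fun i _ => ?_
            rw [div_pow, mul_pow, mul_div_assoc]
            have := hei2 i
            gcongr
        _ = _ := by
            rw [← Finset.sum_mul, rho_sq, hl]
            field_simp
    rw [mul_pow, hS2]
    linarith
  have hM0 : 0 ≤ R * S := by positivity
  have hp1 := mech_prob σ₁ σ₂ w g hwmeas hgmeas X
  have hp2 := mech_prob σ₁ σ₂ w g hwmeas hgmeas (X + e)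
  have hb := fun B hB t => shift_bound σ₁ σ₂ w g hσ₁ hwmeas (fun m => (hrho m).ne') hgmeas X e
    (R * S) hM0 hM B hB t
  have hPhi0 : ∀ x, 0 ≤ Phi x := fun x => ENNReal.toReal_nonneg
  have c1 : ((maskedMech σ₁ σ₂ w g (X + e)) {y}).toReal ≤ Phi (PhiInv pMinus + R * S) := by
    refine ENNReal.toReal_le_of_le_ofReal (hPhi0 _) (hb {y} (measurableSet_singleton y) _ ?_)
    rw [Phi_PhiInv hpMinus]
    exact (ENNReal.le_ofReal_iff_toReal_le (measure_ne_top _ _) hpMinus.1.le).2 (hminus y hy)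
  have c2 : ((maskedMech σ₁ σ₂ w g (X + e)) {yPlus}ᶜ).toReal ≤ Phi (-PhiInv pPlus + R * S) := by
    refine ENNReal.toReal_le_of_le_ofReal (hPhi0 _)
      (hb {yPlus}ᶜ (measurableSet_singleton yPlus).compl _ ?_)
    rw [Phi_neg, Phi_PhiInv hpPlus]
    refine (ENNReal.le_ofReal_iff_toReal_le (measure_ne_top _ _) (by linarith [hpPlus.2])).2 ?_
    have := probReal_compl_eq_one_sub (μ := maskedMech σ₁ σ₂ w g X)
      (measurableSet_singleton yPlus)
    simp only [measureReal_def] at this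
    rw [this]; linarith
  have c3 := probReal_compl_eq_one_sub (μ := maskedMech σ₁ σ₂ w g (X + e))
      (measurableSet_singleton yPlus)
  simp only [measureReal_def] at c3
  rw [c3, show -PhiInv pPlus + R * S = -(PhiInv pPlus - R * S) by ring, Phi_neg] at c2
  have c4 := Phi_mono (show PhiInv pMinus + R * S ≤ PhiInv pPlus - R * S by linarith)
  linarith
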